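/- Let ρ, h : ℝ × ℝ³ → ℝ and V, B : ℝ × ℝ³ → ℝ³ be smooth with ρ(t,x) > 0 for all (t,x), and suppose there is a compact set K ⊆ ℝ³ such that V(t,·) and B(t,·) vanish outside K for every t. Assume that for all (t,x) the barotropic MHD equations hold: ∂ₜV = −(∇×V)×V − ∇(h + |V|²/2) + ρ⁻¹((∇×B)×B), ∂ₜB = ∇×(V×B), and ∇·B = 0. Then the cross helicity t ↦ ∫_{ℝ³} V(t,x)·B(t,x) dx is constant in t. -/

import Mathlib

/-!
Write `ω = ∇×V`, `E = V×B` and `φ = h + |V|²/2`. The Lorentz force is orthogonal to `B`, so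
`∂ₜ(V·B) = -(ω×V)·B - ∇φ·B + V·(∇×E)`. Since `(ω×V)·B = E·ω`, the identity
`∇·(E×V) = (∇×E)·V - E·(∇×V)` together with `∇·B = 0` turns the right-hand side into
`∇·(E×V - φB)`. This is a local conservation law whose flux vanishes wherever `B` does, and a
compactly supported divergence integrates to zero.
-/

open MeasureTheory

/-- `i`-th spatial partial derivative of a scalar field on ℝ³. -/
noncomputable def pd3 (i : Fin 3) (f : (Fin 3 → ℝ) → ℝ) (x : Fin 3 → ℝ) : ℝ :=
  fderiv ℝ f x (Pi.single i 1)

/-- Gradient of a scalar field on ℝ³. -/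
noncomputable def grad3 (f : (Fin 3 → ℝ) → ℝ) (x : Fin 3 → ℝ) : Fin 3 → ℝ :=
  fun i => pd3 i f x

/-- Divergence of a vector field on ℝ³. -/
noncomputable def div3 (F : (Fin 3 → ℝ) → (Fin 3 → ℝ)) (x : Fin 3 → ℝ) : ℝ :=
  ∑ i, pd3 i (fun y => F y i) x

/-- Curl of a vector field on ℝ³. -/
noncomputable def curl3 (F : (Fin 3 → ℝ) → (Fin 3 → ℝ)) (x : Fin 3 → ℝ) : Fin 3 → ℝ :=
  ![pd3 1 (fun y => F y 2) x - pd3 2 (fun y => F y 1) x,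
    pd3 2 (fun y => F y 0) x - pd3 0 (fun y => F y 2) x,
    pd3 0 (fun y => F y 1) x - pd3 1 (fun y => F y 0) x]

/-- Cross product on ℝ³. -/
def cross3 (a b : Fin 3 → ℝ) : Fin 3 → ℝ :=
  ![a 1 * b 2 - a 2 * b 1, a 2 * b 0 - a 0 * b 2, a 0 * b 1 - a 1 * b 0]

/-- Euclidean dot product on ℝ³. -/
def dot3 (a b : Fin 3 → ℝ) : ℝ := ∑ i, a i * b i

section Calculus

variable {𝕜 E F X : Type*} [RCLike 𝕜] [NormedAddCommGroup E] [NormedAddCommGroup F]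

theorem integral_fderiv_apply_eq_zero_of_integrable [NormedSpace ℝ E] [FiniteDimensional ℝ E]
    [MeasurableSpace E] [BorelSpace E] [NormedSpace ℝ F] {μ : Measure E} [μ.IsAddHaarMeasure]
    {f : E → F} {v : E} (hf : Differentiable ℝ f) (hfi : Integrable f μ)
    (hfi' : Integrable (fun x => fderiv ℝ f x v) μ) :
    ∫ x, fderiv ℝ f x v ∂μ = 0 := by
  simpa using integral_smul_fderiv_eq_neg_fderiv_smul_of_integrable (𝕜 := ℝ) (μ := μ)
    (f := fun _ => (1 : ℝ)) (g := f) (v := v) (by simp) (by simpa using hfi')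
    (by simpa using hfi) (fun _ _ => differentiableAt_const _) (fun x _ => hf x)

theorem continuous_uncurry_of_hasDerivAt_of_contDiff [NormedSpace 𝕜 E] [NormedSpace 𝕜 F]
    {u u' : 𝕜 → E → F} (hu : ContDiff 𝕜 1 (Function.uncurry u))
    (hu' : ∀ t x, HasDerivAt (u · x) (u' t x) t) : Continuous (Function.uncurry u') := by
  have fderiv_eq : Function.uncurry u' =
      fun p => fderiv 𝕜 (Function.uncurry u) p ((1 : 𝕜), (0 : E)) := by
    funext ⟨t, x⟩
    have hline : HasDerivAt (fun s : 𝕜 => (s, x)) ((1 : 𝕜), (0 : E)) t :=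
      (hasDerivAt_id t).prodMk (hasDerivAt_const t x)
    have hdiff := (hu.differentiable one_ne_zero (t, x)).hasFDerivAt
    exact (hu' t x).unique (hdiff.comp_hasDerivAt (f := fun s => (s, x)) t hline)
  rw [fderiv_eq]
  exact (hu.continuous_fderiv one_ne_zero).clm_apply continuous_const

theorem hasDerivAt_integral_of_continuous_of_isCompact [TopologicalSpace X] [T2Space X]
    [MeasurableSpace X] [OpensMeasurableSpace X] {μ : Measure X} [IsFiniteMeasureOnCompacts μ]
    [NormedSpace ℝ F] [NormedSpace 𝕜 F] {u u' : 𝕜 → X → F} {K : Set X} (hK : IsCompact K)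
    (hu : ∀ t, Continuous (u t)) (hu' : Continuous (Function.uncurry u'))
    (hderiv : ∀ t x, HasDerivAt (u · x) (u' t x) t) (huK : ∀ t, ∀ x ∉ K, u t x = 0) (t : 𝕜) :
    HasDerivAt (fun s => ∫ x, u s x ∂μ) (∫ x, u' t x ∂μ) t := by
  have hu'K : ∀ s, ∀ x ∉ K, u' s x = 0 := fun s x hx =>
    (hderiv s x).unique (by simpa only [huK _ x hx] using hasDerivAt_const s (0 : F))
  have integrable_slice : ∀ {v : X → F}, Continuous v → (∀ x ∉ K, v x = 0) → Integrable v μ :=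
    fun hv hvK => hv.integrable_of_hasCompactSupport (HasCompactSupport.intro hK hvK)
  have hu'_slice : Continuous (u' t) := hu'.comp (Continuous.prodMk_right t)
  obtain ⟨C, hC⟩ := ((isCompact_closedBall t 1).prod hK).exists_bound_of_continuousOn
    hu'.continuousOn
  have norm_le_bound : ∀ x, ∀ s ∈ Metric.closedBall t 1,
      ‖u' s x‖ ≤ K.indicator (fun _ => C) x := by
    intro x s hs
    by_cases hx : x ∈ K
    · simpa [hx] using hC (s, x) ⟨hs, hx⟩
    · simp [hx, hu'K s x hx]
  exact (hasDerivAt_integral_of_dominated_loc_of_deriv_le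
    (Metric.closedBall_mem_nhds t one_pos)
    (.of_forall fun s => (integrable_slice (hu s) (huK s)).aestronglyMeasurable)
    (integrable_slice (hu t) (huK t))
    (integrable_slice hu'_slice (hu'K t)).aestronglyMeasurable
    (.of_forall norm_le_bound)
    ((integrable_indicator_iff hK.measurableSet).2 (integrableOn_const hK.measure_lt_top.ne))
    (.of_forall fun x s _ => hderiv s x)).2

end Calculus

section VectorAlgebra

open scoped Matrix

theorem dot3_eq_dotProduct (a b : Fin 3 → ℝ) : dot3 a b = a ⬝ᵥ b := rfl

theorem cross3_eq_crossProduct (a b : Fin 3 → ℝ) : cross3 a b = a ⨯₃ b :=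
  (cross_apply a b).symm

theorem dot3_add_left (a b c : Fin 3 → ℝ) : dot3 (a + b) c = dot3 a c + dot3 b c :=
  add_dotProduct a b c

theorem dot3_cross3_cyclic (a b c : Fin 3 → ℝ) :
    dot3 (cross3 a b) c = dot3 (cross3 c a) b := by
  rw [dot3_eq_dotProduct, dot3_eq_dotProduct, cross3_eq_crossProduct, cross3_eq_crossProduct,
    dotProduct_comm, dotProduct_comm _ b]
  exact (triple_product_permutation c a b).trans (triple_product_permutation a b c)

theorem dot3_smul_cross3_self (r : ℝ) (a b : Fin 3 → ℝ) : dot3 (r • cross3 a b) b = 0 := by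
  rw [dot3_eq_dotProduct, cross3_eq_crossProduct, smul_dotProduct, dotProduct_comm,
    dot_cross_self, smul_zero]

end VectorAlgebra

section VectorCalculus

variable {f g : (Fin 3 → ℝ) → ℝ} {v w : (Fin 3 → ℝ) → (Fin 3 → ℝ)} {x : Fin 3 → ℝ}

theorem pd3_mul (i : Fin 3) (hf : DifferentiableAt ℝ f x) (hg : DifferentiableAt ℝ g x) :
    pd3 i (fun y => f y * g y) x = f x * pd3 i g x + pd3 i f x * g x := by
  simp [pd3, fderiv_fun_mul hf hg, mul_comm]

theorem pd3_sub (i : Fin 3) (hf : DifferentiableAt ℝ f x) (hg : DifferentiableAt ℝ g x) :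
    pd3 i (fun y => f y - g y) x = pd3 i f x - pd3 i g x := by
  simp [pd3, fderiv_fun_sub hf hg]

theorem div3_sub (hv : DifferentiableAt ℝ v x) (hw : DifferentiableAt ℝ w x) :
    div3 (fun y => v y - w y) x = div3 v x - div3 w x := by
  simp only [div3, Pi.sub_apply, ← Finset.sum_sub_distrib]
  exact Finset.sum_congr rfl fun i _ =>
    pd3_sub i (differentiableAt_pi.1 hv i) (differentiableAt_pi.1 hw i)

theorem div3_smul (hf : DifferentiableAt ℝ f x) (hv : DifferentiableAt ℝ v x) :
    div3 (fun y => f y • v y) x = f x * div3 v x + dot3 (grad3 f x) (v x) := by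
  simp only [div3, dot3, grad3, Pi.smul_apply, smul_eq_mul, Finset.mul_sum,
    ← Finset.sum_add_distrib]
  exact Finset.sum_congr rfl fun i _ => pd3_mul i hf (differentiableAt_pi.1 hv i)

theorem div3_cross3 (hv : DifferentiableAt ℝ v x) (hw : DifferentiableAt ℝ w x) :
    div3 (fun y => cross3 (v y) (w y)) x =
      dot3 (curl3 v x) (w x) - dot3 (v x) (curl3 w x) := by
  have hv' := differentiableAt_pi.1 hv
  have hw' := differentiableAt_pi.1 hw
  simp (disch := fun_prop) only [div3, dot3, cross3, curl3, Fin.sum_univ_three, Matrix.cons_val,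
    pd3_mul, pd3_sub]
  ring

theorem integral_div3_eq_zero (hv : ContDiff ℝ 1 v) (hc : HasCompactSupport v) :
    ∫ x, div3 v x = 0 := by
  have hvi : ∀ i, ContDiff ℝ 1 (fun y => v y i) := contDiff_pi.1 hv
  have hci : ∀ i, HasCompactSupport (fun y => v y i) := fun i =>
    hc.comp_left (g := fun a : Fin 3 → ℝ => a i) rfl
  have integrable_pd3 : ∀ i, Integrable (pd3 i fun y => v y i) := fun i =>
    (((hvi i).continuous_fderiv one_ne_zero).clm_apply
      continuous_const).integrable_of_hasCompactSupport ((hci i).fderiv_apply (𝕜 := ℝ) _)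
  simp only [div3]
  rw [integral_finsetSum _ fun i _ => integrable_pd3 i]
  exact Finset.sum_eq_zero fun i _ => integral_fderiv_apply_eq_zero_of_integrable
    ((hvi i).differentiable one_ne_zero)
    ((hvi i).continuous.integrable_of_hasCompactSupport (hci i)) (integrable_pd3 i)

end VectorCalculus

section Products

variable {E : Type*} [NormedAddCommGroup E] [NormedSpace ℝ E]

theorem contDiff_dot3 {n : WithTop ℕ∞} {v w : E → (Fin 3 → ℝ)} (hv : ContDiff ℝ n v)
    (hw : ContDiff ℝ n w) : ContDiff ℝ n (fun y => dot3 (v y) (w y)) :=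
  ContDiff.sum fun i _ => (contDiff_pi.1 hv i).mul (contDiff_pi.1 hw i)

theorem differentiableAt_cross3 {v w : E → (Fin 3 → ℝ)} {x : E} (hv : DifferentiableAt ℝ v x)
    (hw : DifferentiableAt ℝ w x) : DifferentiableAt ℝ (fun y => cross3 (v y) (w y)) x := by
  have hminor : ∀ i j, DifferentiableAt ℝ (fun y => v y i * w y j - v y j * w y i) x := by
    fun_prop
  refine differentiableAt_pi.2 fun i => ?_
  fin_cases i
  exacts [hminor 1 2, hminor 2 0, hminor 0 1]

theorem contDiff_cross3 {n : WithTop ℕ∞} {v w : E → (Fin 3 → ℝ)} (hv : ContDiff ℝ n v)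
    (hw : ContDiff ℝ n w) : ContDiff ℝ n (fun y => cross3 (v y) (w y)) := by
  have hminor : ∀ i j, ContDiff ℝ n (fun y => v y i * w y j - v y j * w y i) := by
    fun_prop
  refine contDiff_pi.2 fun i => ?_
  fin_cases i
  exacts [hminor 1 2, hminor 2 0, hminor 0 1]

theorem hasDerivAt_dot3 {v w : ℝ → (Fin 3 → ℝ)} {v' w' : Fin 3 → ℝ} {t : ℝ}
    (hv : HasDerivAt v v' t) (hw : HasDerivAt w w' t) :
    HasDerivAt (fun s => dot3 (v s) (w s)) (dot3 v' (w t) + dot3 (v t) w') t := by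
  simp only [dot3, ← Finset.sum_add_distrib]
  exact HasDerivAt.fun_sum fun i _ => (hasDerivAt_pi.1 hv i).mul (hasDerivAt_pi.1 hw i)

end Products

theorem integral_eq_of_hasDerivAt_div3 {u : ℝ → (Fin 3 → ℝ) → ℝ}
    {J : ℝ → (Fin 3 → ℝ) → (Fin 3 → ℝ)} {K : Set (Fin 3 → ℝ)} (hK : IsCompact K)
    (hu : ContDiff ℝ 1 (Function.uncurry u)) (hJ : ∀ t, ContDiff ℝ 1 (J t))
    (huK : ∀ t, ∀ x ∉ K, u t x = 0) (hJK : ∀ t, ∀ x ∉ K, J t x = 0)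
    (hlaw : ∀ t x, HasDerivAt (u · x) (div3 (J t) x) t) (t₁ t₂ : ℝ) :
    ∫ x, u t₁ x = ∫ x, u t₂ x := by
  have hderiv : ∀ t, HasDerivAt (fun s => ∫ x, u s x) 0 t := fun t => by
    rw [← integral_div3_eq_zero (hJ t) (HasCompactSupport.intro hK (hJK t))]
    exact hasDerivAt_integral_of_continuous_of_isCompact hK
      (fun s => hu.continuous.comp (Continuous.prodMk_right s))
      (continuous_uncurry_of_hasDerivAt_of_contDiff hu hlaw) hlaw huK t
  exact is_const_of_deriv_eq_zero (fun t => (hderiv t).differentiableAt)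
    (fun t => (hderiv t).deriv) t₁ t₂

section CrossHelicity

/-- The flux `φ B - (V×B)×V` of the cross helicity density `V·B`, with the sign reversed so that
the local conservation law reads `∂ₜ(V·B) = ∇·J`. Here `φ` is the Bernoulli function
`h + |V|²/2`. -/
def crossHelicityFlux (φ : (Fin 3 → ℝ) → ℝ) (v b : (Fin 3 → ℝ) → (Fin 3 → ℝ))
    (x : Fin 3 → ℝ) : Fin 3 → ℝ :=
  cross3 (cross3 (v x) (b x)) (v x) - φ x • b x

variable {φ : (Fin 3 → ℝ) → ℝ} {v b : (Fin 3 → ℝ) → (Fin 3 → ℝ)} {x : Fin 3 → ℝ}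

theorem crossHelicityFlux_eq_zero (hx : b x = 0) : crossHelicityFlux φ v b x = 0 := by
  simp [crossHelicityFlux, cross3_eq_crossProduct, hx]

theorem contDiff_crossHelicityFlux {n : WithTop ℕ∞} (hφ : ContDiff ℝ n φ) (hv : ContDiff ℝ n v)
    (hb : ContDiff ℝ n b) : ContDiff ℝ n (crossHelicityFlux φ v b) :=
  (contDiff_cross3 (contDiff_cross3 hv hb) hv).sub (hφ.smul hb)

theorem div3_crossHelicityFlux (hφ : DifferentiableAt ℝ φ x) (hv : DifferentiableAt ℝ v x)
    (hb : DifferentiableAt ℝ b x) (hdiv : div3 b x = 0) :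
    div3 (crossHelicityFlux φ v b) x =
      dot3 (-cross3 (curl3 v x) (v x) - grad3 φ x) (b x) +
        dot3 (v x) (curl3 (fun y => cross3 (v y) (b y)) x) := by
  have hE := differentiableAt_cross3 hv hb
  calc div3 (crossHelicityFlux φ v b) x
      = div3 (fun y => cross3 (cross3 (v y) (b y)) (v y)) x - div3 (fun y => φ y • b y) x :=
        div3_sub (differentiableAt_cross3 hE hv) (hφ.smul hb)
    _ = dot3 (curl3 (fun y => cross3 (v y) (b y)) x) (v x)
          - dot3 (cross3 (v x) (b x)) (curl3 v x) - dot3 (grad3 φ x) (b x) := by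
        rw [div3_cross3 hE hv, div3_smul hφ hb, hdiv, mul_zero, zero_add]
    _ = dot3 (curl3 (fun y => cross3 (v y) (b y)) x) (v x)
          - dot3 (cross3 (curl3 v x) (v x)) (b x) - dot3 (grad3 φ x) (b x) := by
        rw [dot3_cross3_cyclic (v x) (b x) (curl3 v x)]
    _ = dot3 (-cross3 (curl3 v x) (v x) - grad3 φ x) (b x) +
          dot3 (v x) (curl3 (fun y => cross3 (v y) (b y)) x) := by
        simp only [dot3_eq_dotProduct, sub_dotProduct, neg_dotProduct, dotProduct_comm (v x)]
        ring

end CrossHelicity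

theorem MHD_cross_helicity_constant_general
    {h : ℝ → (Fin 3 → ℝ) → ℝ} {V B f : ℝ → (Fin 3 → ℝ) → (Fin 3 → ℝ)}
    (hh : ∀ t, ContDiff ℝ 1 (h t))
    (hV : ContDiff ℝ 1 (Function.uncurry V)) (hB : ContDiff ℝ 1 (Function.uncurry B))
    {K : Set (Fin 3 → ℝ)} (hK : IsCompact K) (hBK : ∀ t, ∀ x ∉ K, B t x = 0)
    (hf : ∀ t x, dot3 (f t x) (B t x) = 0)
    (hmom : ∀ t x, deriv (fun τ => V τ x) t =
      -cross3 (curl3 (V t) x) (V t x)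
        - grad3 (fun y => h t y + dot3 (V t y) (V t y) / 2) x + f t x)
    (hind : ∀ t x, deriv (fun τ => B τ x) t =
      curl3 (fun y => cross3 (V t y) (B t y)) x)
    (hdivB : ∀ t x, div3 (B t) x = 0) (t₁ t₂ : ℝ) :
    ∫ x, dot3 (V t₁ x) (B t₁ x) = ∫ x, dot3 (V t₂ x) (B t₂ x) := by
  have hVx : ∀ t, ContDiff ℝ 1 (V t) := fun t => hV.comp (contDiff_prodMk_right t)
  have hBx : ∀ t, ContDiff ℝ 1 (B t) := fun t => hB.comp (contDiff_prodMk_right t)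
  let φ t y := h t y + dot3 (V t y) (V t y) / 2
  have hφ : ∀ t, ContDiff ℝ 1 (φ t) := fun t =>
    (hh t).add ((contDiff_dot3 (hVx t) (hVx t)).div_const 2)
  have hVt : ∀ t x, DifferentiableAt ℝ (V · x) t := fun t x =>
    (hV.comp (contDiff_prodMk_left x)).differentiable one_ne_zero t
  have hBt : ∀ t x, DifferentiableAt ℝ (B · x) t := fun t x =>
    (hB.comp (contDiff_prodMk_left x)).differentiable one_ne_zero t
  have local_conservation : ∀ t x, HasDerivAt (fun τ => dot3 (V τ x) (B τ x))
      (div3 (crossHelicityFlux (φ t) (V t) (B t)) x) t := fun t x => by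
    convert hasDerivAt_dot3 (hVt t x).hasDerivAt (hBt t x).hasDerivAt using 1
    rw [div3_crossHelicityFlux ((hφ t).differentiable one_ne_zero x)
      ((hVx t).differentiable one_ne_zero x) ((hBx t).differentiable one_ne_zero x) (hdivB t x),
      hmom, hind, dot3_add_left _ (f t x), hf, add_zero]
  exact integral_eq_of_hasDerivAt_div3 (u := fun t x => dot3 (V t x) (B t x)) hK
    (contDiff_dot3 hV hB) (fun t => contDiff_crossHelicityFlux (hφ t) (hVx t) (hBx t))
    (fun t x hx => by simp [dot3_eq_dotProduct, hBK t x hx])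
    (fun t x hx => crossHelicityFlux_eq_zero (hBK t x hx)) local_conservation t₁ t₂

/-- Conservation of the cross helicity `C₃ = ∫ V·B` for the ideal
barotropic MHD equations with spatially compactly supported fields. -/
theorem MHD_cross_helicity_constant
    (ρ h : ℝ → (Fin 3 → ℝ) → ℝ)
    (V B : ℝ → (Fin 3 → ℝ) → (Fin 3 → ℝ))
    (hρ : ContDiff ℝ (⊤ : ℕ∞) (fun p : ℝ × (Fin 3 → ℝ) => ρ p.1 p.2))
    (hh : ContDiff ℝ (⊤ : ℕ∞) (fun p : ℝ × (Fin 3 → ℝ) => h p.1 p.2))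
    (hV : ContDiff ℝ (⊤ : ℕ∞) (fun p : ℝ × (Fin 3 → ℝ) => V p.1 p.2))
    (hB : ContDiff ℝ (⊤ : ℕ∞) (fun p : ℝ × (Fin 3 → ℝ) => B p.1 p.2))
    (hρpos : ∀ t x, 0 < ρ t x)
    (K : Set (Fin 3 → ℝ)) (hK : IsCompact K)
    (hVsupp : ∀ t x, x ∉ K → V t x = 0)
    (hBsupp : ∀ t x, x ∉ K → B t x = 0)
    (hmom : ∀ t x, deriv (fun τ => V τ x) t =
      -cross3 (curl3 (V t) x) (V t x)
        - grad3 (fun y => h t y + dot3 (V t y) (V t y) / 2) x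
        + (ρ t x)⁻¹ • cross3 (curl3 (B t) x) (B t x))
    (hind : ∀ t x, deriv (fun τ => B τ x) t =
      curl3 (fun y => cross3 (V t y) (B t y)) x)
    (hdivB : ∀ t x, div3 (B t) x = 0) :
    ∀ t₁ t₂ : ℝ,
      (∫ x : Fin 3 → ℝ, dot3 (V t₁ x) (B t₁ x)) =
        ∫ x : Fin 3 → ℝ, dot3 (V t₂ x) (B t₂ x) :=
  MHD_cross_helicity_constant_general
    (fun t => (hh.comp (contDiff_prodMk_right t)).of_le (mod_cast le_top))
    (hV.of_le (mod_cast le_top)) (hB.of_le (mod_cast le_top)) hK hBsupp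
    (fun _ _ => dot3_smul_cross3_self _ _ _) hmom hind hdivB
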